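/- arXiv:1808.01842 — 12 statements merged into one kernel-verified Lean document; each statement's English description precedes it below -/
import Mathlib

section
/- Let f : Finset E → ℝ be non-negative, monotone, submodular, let O be a finset with f(O) = OPT, let S be a finset, and let τ ≥ 0. If f(o|S) ≤ τ for every o ∈ O, then f(S) ≥ OPT − |O|·τ. -/
/-!
By monotonicity `f O ≤ f (S ∪ O)`, and `S ∪ O` is reached from `S` by inserting the elements of `O`
one at a time. By submodularity the gain of each insertion is at most the marginal gain with respect
to `S` itself, hence at most `τ`, so `f (S ∪ O) ≤ f S + |O| · τ`.
-/

open Finset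

/-- Threshold argument: if every element of `O` has marginal gain at most `τ`
with respect to `S`, then `f S ≥ OPT - |O| · τ`. -/
theorem stmt_0 {E : Type*} [DecidableEq E]
    (f : Finset E → ℝ)
    (hnonneg : ∀ X : Finset E, 0 ≤ f X)
    (hmono : ∀ X Y : Finset E, X ⊆ Y → f X ≤ f Y)
    (hsubmod : ∀ X Y : Finset E, X ⊆ Y → ∀ e ∉ Y,
      f (insert e Y) - f Y ≤ f (insert e X) - f X)
    (O S : Finset E) (OPT τ : ℝ)
    (hOPT : f O = OPT) (hτ : 0 ≤ τ)
    (hthr : ∀ o ∈ O, f (insert o S) - f S ≤ τ) :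
    f S ≥ OPT - (O.card : ℝ) * τ := by
  have key : ∀ T : Finset E, T ⊆ O → f (S ∪ T) ≤ f S + (T.card : ℝ) * τ := by
    intro T
    induction T using Finset.induction_on with
    | empty => intro _; simp
    | insert a T ha ih =>
      intro hT
      have ih' := ih ((Finset.subset_insert a T).trans hT)
      rw [Finset.union_insert, Finset.card_insert_of_notMem ha]
      push_cast
      by_cases haS : a ∈ S ∪ T
      · -- here `a` already lies in `S`, so the step gains `0 ≤ τ`
        rw [Finset.insert_eq_of_mem haS]
        linarith
      · have h1 := hsubmod S (S ∪ T) Finset.subset_union_left a haS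
        have h2 := hthr a (hT (Finset.mem_insert_self a T))
        linarith
  have h1 := key O (Finset.Subset.refl O)
  have h2 := hmono O (S ∪ O) Finset.subset_union_right
  linarith
end

section
/- Let k ≥ 1, let f : Finset E → ℝ be non-negative, monotone, submodular, and let O be a finset with |O| ≤ k and f(O) = OPT. Let S₁ ⊆ S be finsets with |S| ≤ k such that: (i) f(S₁) ≥ |S₁| · (2·OPT)/(3k); (ii) f(S) ≥ f(S₁) + |S \ S₁| · (4·OPT)/(9k); (iii) if |S₁| < k then f(o|S₁) ≤ (2·OPT)/(3k) for every o ∈ O; (iv) if |S| < k then f(o|S) ≤ (4·OPT)/(9k) for every o ∈ O. Then f(S) ≥ (5/9)·OPT. (This is the guarantee of the TwoPass algorithm, which in its first pass picks any element with marginal gain at least 2OPT/(3k) and in its second pass any element with marginal gain at least 4OPT/(9k), as long as fewer than k elements are selected; S₁ is the set after the first pass and S the final set.) -/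
/-!
By monotonicity and submodularity, if `|O| ≤ k` and every `o ∈ O` has marginal gain at most `c ≥ 0`
over `A`, then
`f O ≤ f A + k * c` (`le_add_card_mul`). Write `t = OPT / (9 * k)`, so the thresholds are `6 * t`
and `4 * t`, and the goal is `f S ≥ 5 * k * t`.

If `|S| < k`, the bound with `A = S`, `c = 4 * t` gives `f S ≥ 9 * k * t - 4 * k * t`.
If `|S| = k`, put `a = |S₁|`, so `f S ≥ f S₁ + (k - a) * 4 * t`. For `a ≥ k / 2` the invariant
`f S₁ ≥ 6 * a * t` suffices; for `a < k / 2` the bound with `A = S₁`, `c = 6 * t` gives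
`f S₁ ≥ 3 * k * t`, which suffices.
-/

open Finset

/-- A uniform bound `c` on the marginal gains over `A` of the elements of `T` bounds the gain of
adding all of `T`: each element added gains no more than it would over `A` alone. -/
lemma union_le_add_card_mul {E : Type*} [DecidableEq E] (f : Finset E → ℝ)
    (hsubmod : ∀ X Y : Finset E, X ⊆ Y → ∀ e ∉ Y,
      f (insert e Y) - f Y ≤ f (insert e X) - f X)
    (A : Finset E) (c : ℝ) (hc : 0 ≤ c) (T : Finset E)
    (hT : ∀ o ∈ T, f (insert o A) - f A ≤ c) :
    f (A ∪ T) ≤ f A + (T.card : ℝ) * c := by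
  induction T using Finset.induction_on with
  | empty => simp
  | insert e T he ih =>
    have ih' := ih fun o ho => hT o (Finset.mem_insert_of_mem ho)
    have hgain := hT e (Finset.mem_insert_self e T)
    rw [Finset.union_insert, Finset.card_insert_of_notMem he]
    push_cast
    by_cases hmem : e ∈ A ∪ T
    · rw [Finset.insert_eq_of_mem hmem]
      linarith
    · have := hsubmod A (A ∪ T) Finset.subset_union_left e hmem
      linarith

lemma le_add_card_mul {E : Type*} [DecidableEq E] (f : Finset E → ℝ)
    (hmono : ∀ X Y : Finset E, X ⊆ Y → f X ≤ f Y)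
    (hsubmod : ∀ X Y : Finset E, X ⊆ Y → ∀ e ∉ Y,
      f (insert e Y) - f Y ≤ f (insert e X) - f X)
    (k : ℕ) (O A : Finset E) (hO : O.card ≤ k) (c : ℝ) (hc : 0 ≤ c)
    (h : ∀ o ∈ O, f (insert o A) - f A ≤ c) :
    f O ≤ f A + (k : ℝ) * c := by
  have hunion := union_le_add_card_mul f hsubmod A c hc O h
  have hle := hmono O (A ∪ O) Finset.subset_union_right
  have hcard : (O.card : ℝ) * c ≤ k * c := by gcongr
  linarith

/-- Guarantee of the TwoPass algorithm: under the invariants (i)–(iv),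
the final set satisfies `f S ≥ (5/9)·OPT`. -/
theorem stmt_1 {E : Type*} [DecidableEq E]
    (k : ℕ) (hk : 1 ≤ k)
    (f : Finset E → ℝ)
    (hnonneg : ∀ X : Finset E, 0 ≤ f X)
    (hmono : ∀ X Y : Finset E, X ⊆ Y → f X ≤ f Y)
    (hsubmod : ∀ X Y : Finset E, X ⊆ Y → ∀ e ∉ Y,
      f (insert e Y) - f Y ≤ f (insert e X) - f X)
    (O : Finset E) (OPT : ℝ) (hOcard : O.card ≤ k) (hOPT : f O = OPT)
    (S₁ S : Finset E) (hS₁S : S₁ ⊆ S) (hScard : S.card ≤ k)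
    (h1 : f S₁ ≥ (S₁.card : ℝ) * ((2 * OPT) / (3 * k)))
    (h2 : f S ≥ f S₁ + ((S \ S₁).card : ℝ) * ((4 * OPT) / (9 * k)))
    (h3 : S₁.card < k → ∀ o ∈ O, f (insert o S₁) - f S₁ ≤ (2 * OPT) / (3 * k))
    (h4 : S.card < k → ∀ o ∈ O, f (insert o S) - f S ≤ (4 * OPT) / (9 * k)) :
    f S ≥ (5 / 9) * OPT := by
  have hk0 : (0 : ℝ) < k := by exact_mod_cast hk
  have hOPT0 : 0 ≤ OPT := hOPT ▸ hnonneg O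
  obtain ⟨t, ht⟩ : ∃ t, t = OPT / (9 * k) := ⟨_, rfl⟩
  have ht0 : 0 ≤ t := by rw [ht]; positivity
  have e1 : (2 * OPT) / (3 * k) = 6 * t := by rw [ht]; field_simp; ring
  have e2 : (4 * OPT) / (9 * k) = 4 * t := by rw [ht]; field_simp
  have e3 : OPT = 9 * (k * t) := by rw [ht]; field_simp
  rw [e1] at h1 h3
  rw [e2] at h2 h4
  rcases hScard.lt_or_eq with hlt | heq
  · have := le_add_card_mul f hmono hsubmod k O S hOcard (4 * t) (by positivity) (h4 hlt)
    linarith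
  · have hdiff : ((S \ S₁).card : ℝ) = k - S₁.card := by
      rw [Finset.cast_card_sdiff hS₁S, heq]
    rw [hdiff] at h2
    rcases le_or_gt k (2 * S₁.card) with hbig | hsmall
    · have hbig' : (k : ℝ) ≤ 2 * S₁.card := by exact_mod_cast hbig
      have := mul_le_mul_of_nonneg_right hbig' ht0
      linarith
    · have hsmall' : (2 : ℝ) * S₁.card ≤ k := by exact_mod_cast hsmall.le
      have := mul_le_mul_of_nonneg_right hsmall' ht0
      have := le_add_card_mul f hmono hsubmod k O S₁ hOcard (6 * t) (by positivity)
        (h3 (by omega))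
      linarith
end

section
/- Let p ≥ 1, k ≥ 1, 1 ≤ i ≤ p, let f : Finset E → ℝ be non-negative, monotone, submodular, let O be a finset with |O| ≤ k and f(O) = OPT, and let S be a finset such that f(o|S) ≤ (p/(p+1))^i · OPT/k for every o ∈ O. Then f(S) ≥ (1 − (p/(p+1))^i) · OPT. -/
/-!
By monotonicity and submodularity, with `c = (p/(p+1))^i · OPT/k`,
`OPT = f O ≤ f (S ∪ O) ≤ f S + |O| · c ≤ f S + k · c = f S + (p/(p+1))^i · OPT`.
The middle inequality is `gain_union_le`: adding the elements of `O` to `S` one at a time, each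
gains at most its marginal gain with respect to `S`.
-/

open Finset

/-- Submodularity bounds the gain of adding `T` to `S` by `|T|` times a bound `c ≥ 0` on the
marginal gains of the elements of `T` with respect to `S`. The sign of `c` matters for the
elements of `T` already in `S`, whose gain is zero. -/
lemma gain_union_le {E : Type*} [DecidableEq E] (f : Finset E → ℝ)
    (hsubmod : ∀ X Y : Finset E, X ⊆ Y → ∀ e ∉ Y,
      f (insert e Y) - f Y ≤ f (insert e X) - f X)
    (S : Finset E) (c : ℝ) (hc : 0 ≤ c) (T : Finset E)
    (hT : ∀ o ∈ T, f (insert o S) - f S ≤ c) :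
    f (S ∪ T) ≤ f S + T.card * c := by
  induction T using Finset.induction_on with
  | empty => simp
  | insert a T ha ih =>
    have ih' := ih fun o ho => hT o (Finset.mem_insert_of_mem ho)
    rw [Finset.union_insert, Finset.card_insert_of_notMem ha]
    push_cast
    by_cases haS : a ∈ S ∪ T
    · rw [Finset.insert_eq_of_mem haS]
      linarith
    · have h1 := hsubmod S (S ∪ T) Finset.subset_union_left a haS
      have h2 := hT a (Finset.mem_insert_self a T)
      linarith

/-- If every element of `O` has marginal gain at most `(p/(p+1))^i · OPT/k`
with respect to `S`, then `f S ≥ (1 − (p/(p+1))^i)·OPT`. -/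
theorem stmt_3 {E : Type*} [DecidableEq E]
    (p k i : ℕ) (hp : 1 ≤ p) (hk : 1 ≤ k) (hi1 : 1 ≤ i) (hip : i ≤ p)
    (f : Finset E → ℝ)
    (hnonneg : ∀ X : Finset E, 0 ≤ f X)
    (hmono : ∀ X Y : Finset E, X ⊆ Y → f X ≤ f Y)
    (hsubmod : ∀ X Y : Finset E, X ⊆ Y → ∀ e ∉ Y,
      f (insert e Y) - f Y ≤ f (insert e X) - f X)
    (O : Finset E) (OPT : ℝ) (hOcard : O.card ≤ k) (hOPT : f O = OPT)
    (S : Finset E)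
    (hthr : ∀ o ∈ O, f (insert o S) - f S ≤ ((p : ℝ) / (p + 1)) ^ i * OPT / k) :
    f S ≥ (1 - ((p : ℝ) / (p + 1)) ^ i) * OPT := by
  have hk0 : (0 : ℝ) < k := by exact_mod_cast hk
  have hOPT0 : 0 ≤ OPT := hOPT ▸ hnonneg O
  have hc : 0 ≤ ((p : ℝ) / (p + 1)) ^ i * OPT / k := by positivity
  have hgain := gain_union_le f hsubmod S _ hc O hthr
  have hO := hmono O (S ∪ O) Finset.subset_union_right
  have hcard : (O.card : ℝ) * (((p : ℝ) / (p + 1)) ^ i * OPT / k)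
      ≤ k * (((p : ℝ) / (p + 1)) ^ i * OPT / k) :=
    mul_le_mul_of_nonneg_right (by exact_mod_cast hOcard) hc
  rw [mul_div_cancel₀ _ hk0.ne'] at hcard
  linarith
end

section
/- Let p ≥ 2 and k ≥ 1 be integers, let f : Finset E → ℝ be non-negative, monotone, submodular, and let O be a finset with |O| ≤ k and f(O) = OPT. Let ∅ = S₀ ⊆ S₁ ⊆ ⋯ ⊆ S_p be finsets with |S_j| ≤ k for all j, such that for every 1 ≤ j ≤ p: (i) f(S_j) ≥ f(S_{j−1}) + (|S_j| − |S_{j−1}|) · (p/(p+1))^j · OPT/k; and (ii) if |S_j| < k then f(o|S_j) ≤ (p/(p+1))^j · OPT/k for every o ∈ O. Then for every 1 ≤ i ≤ p−1 and every real α ≥ 0, if |S_i| ≥ k·(i/p + α), then f(S_i) ≥ OPT · (1 − (p/(p+1))^i + α·(p/(p+1))^{i+1}). -/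
/-!
Write `q = p / (p + 1)`, so that `q / p = 1 - q`. The bound is proved by induction on `i`,
starting from the trivial case `i = 0`. For the step from `j` to `j + 1`, let
`β = |S_j| / k - j / p` be the (signed) surplus after pass `j`. In both cases below
`f (S_j) ≥ OPT * (1 - q ^ j + β * q ^ (j + 1))`:

* if `β ≥ 0`, this is the induction hypothesis with `α = β`;
* if `β < 0`, then `j ≥ 1` and `|S_j| < k`, so every marginal gain of an element of `O` is at most
  `q ^ j * OPT / k`, and submodularity gives `OPT ≤ f (S_j) + q ^ j * OPT`
  (`opt_le_of_marginals_le`).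

Pass `j + 1` picks at least `k * (1 / p + α - β)` elements, each worth `q ^ (j + 1) * OPT / k`, and
`q ^ (j + 1) / p = q ^ j - q ^ (j + 1)`, so the `β` terms cancel and
`f (S_{j+1}) ≥ OPT * (1 - q ^ (j + 1) + α * q ^ (j + 1))`, slightly more than needed.
-/

open Finset

theorem submodular_union_le {E : Type*} [DecidableEq E] (f : Finset E → ℝ)
    (hsubmod : ∀ X Y : Finset E, X ⊆ Y → ∀ e ∉ Y,
      f (insert e Y) - f Y ≤ f (insert e X) - f X)
    (hmono : ∀ X Y : Finset E, X ⊆ Y → f X ≤ f Y)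
    (S O : Finset E) :
    f (S ∪ O) ≤ f S + ∑ o ∈ O, (f (insert o S) - f S) := by
  induction O using Finset.induction_on with
  | empty => simp
  | insert a O ha ih =>
    rw [Finset.sum_insert ha, Finset.union_insert]
    by_cases h : a ∈ S ∪ O
    · rw [Finset.insert_eq_of_mem h]
      linarith [hmono S (insert a S) (Finset.subset_insert a S)]
    · linarith [hsubmod S (S ∪ O) Finset.subset_union_left a h]

theorem opt_le_of_marginals_le {E : Type*} [DecidableEq E] (f : Finset E → ℝ)
    (hsubmod : ∀ X Y : Finset E, X ⊆ Y → ∀ e ∉ Y,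
      f (insert e Y) - f Y ≤ f (insert e X) - f X)
    (hmono : ∀ X Y : Finset E, X ⊆ Y → f X ≤ f Y)
    (S O : Finset E) (k : ℕ) (hk : 1 ≤ k) (hO : O.card ≤ k) (c : ℝ) (hc : 0 ≤ c)
    (h : ∀ o ∈ O, f (insert o S) - f S ≤ c / k) :
    f O ≤ f S + c := by
  have hk0 : (0 : ℝ) < k := by exact_mod_cast hk
  have hsum := Finset.sum_le_card_nsmul O _ _ h
  have hle : (O.card : ℝ) * (c / k) ≤ k * (c / k) :=
    mul_le_mul_of_nonneg_right (by exact_mod_cast hO) (by positivity)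
  rw [mul_div_cancel₀ c hk0.ne'] at hle
  rw [nsmul_eq_mul] at hsum
  linarith [hmono O (S ∪ O) Finset.subset_union_right, submodular_union_le f hsubmod hmono S O]

/-- Lemma "full early" of the p-pass analysis. -/
theorem stmt_4 {E : Type*} [DecidableEq E]
    (p k : ℕ) (hp : 2 ≤ p) (hk : 1 ≤ k)
    (f : Finset E → ℝ)
    (hnonneg : ∀ X : Finset E, 0 ≤ f X)
    (hmono : ∀ X Y : Finset E, X ⊆ Y → f X ≤ f Y)
    (hsubmod : ∀ X Y : Finset E, X ⊆ Y → ∀ e ∉ Y,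
      f (insert e Y) - f Y ≤ f (insert e X) - f X)
    (O : Finset E) (OPT : ℝ) (hOcard : O.card ≤ k) (hOPT : f O = OPT)
    (S : ℕ → Finset E) (hS0 : S 0 = ∅)
    (hchain : ∀ j, 1 ≤ j → j ≤ p → S (j - 1) ⊆ S j)
    (hcard : ∀ j, j ≤ p → (S j).card ≤ k)
    (h1 : ∀ j, 1 ≤ j → j ≤ p →
      f (S j) ≥ f (S (j - 1)) +
        (((S j).card : ℝ) - ((S (j - 1)).card : ℝ)) *
          (((p : ℝ) / (p + 1)) ^ j * OPT / k))
    (h2 : ∀ j, 1 ≤ j → j ≤ p → (S j).card < k →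
      ∀ o ∈ O, f (insert o (S j)) - f (S j) ≤ ((p : ℝ) / (p + 1)) ^ j * OPT / k) :
    ∀ i, 1 ≤ i → i ≤ p - 1 → ∀ α : ℝ, 0 ≤ α →
      (k : ℝ) * ((i : ℝ) / p + α) ≤ ((S i).card : ℝ) →
      f (S i) ≥ OPT * (1 - ((p : ℝ) / (p + 1)) ^ i + α * ((p : ℝ) / (p + 1)) ^ (i + 1)) := by
  have hk0 : (0 : ℝ) < k := by exact_mod_cast hk
  have hp0 : (0 : ℝ) < p := by exact_mod_cast (by omega : 0 < p)
  have hOPT0 : 0 ≤ OPT := hOPT ▸ hnonneg O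
  have hq : (p : ℝ) / (p + 1) * (1 / p) = 1 - (p : ℝ) / (p + 1) := by
    field_simp
    ring
  have hq0 : 0 ≤ (p : ℝ) / (p + 1) := by positivity
  have hq1 : (p : ℝ) / (p + 1) ≤ 1 := by
    rw [div_le_one (by positivity)]
    linarith
  generalize (p : ℝ) / (p + 1) = q at *
  suffices H : ∀ i, i ≤ p - 1 → ∀ α : ℝ, 0 ≤ α →
      (k : ℝ) * ((i : ℝ) / p + α) ≤ ((S i).card : ℝ) →
      OPT * (1 - q ^ i + α * q ^ (i + 1)) ≤ f (S i) from fun i _ hi => H i hi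
  intro i
  induction i with
  | zero =>
    intro _ α hα h
    have hα0 : α = 0 := by
      simp only [hS0, Nat.cast_zero, zero_div, zero_add, Finset.card_empty] at h
      nlinarith
    simpa [hα0] using hnonneg (S 0)
  | succ j ih =>
    intro hj α hα h
    have hstep := h1 (j + 1) (by omega) (by omega)
    rw [Nat.add_sub_cancel] at hstep
    obtain ⟨β, hβ⟩ : ∃ β : ℝ, ((S j).card : ℝ) = k * ((j : ℝ) / p + β) :=
      ⟨(S j).card / k - j / p, by field_simp; ring⟩
    have hqj : 0 ≤ OPT * q ^ (j + 1) := by positivity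
    have hprev : OPT * (1 - q ^ j + β * q ^ (j + 1)) ≤ f (S j) := by
      rcases le_or_gt 0 β with hb | hb
      · exact ih (by omega) β hb hβ.ge
      · -- A deficit is impossible at `j = 0`, and it forces `|S_j| < k * (j / p) ≤ k`.
        have hj1 : 1 ≤ j := by
          by_contra hj0
          obtain rfl : j = 0 := by omega
          simp only [hS0, Nat.cast_zero, zero_div, zero_add, Finset.card_empty] at hβ
          nlinarith
        have hlt : (S j).card < k := by
          have hjp : (j : ℝ) / p ≤ 1 := by
            rw [div_le_one hp0]
            exact_mod_cast (by omega : j ≤ p)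
          have : ((S j).card : ℝ) < k := by rw [hβ]; nlinarith
          exact_mod_cast this
        have hopt := opt_le_of_marginals_le f hsubmod hmono (S j) O k hk hOcard (q ^ j * OPT)
          (by positivity) (h2 j hj1 (by omega) hlt)
        rw [hOPT] at hopt
        nlinarith
    have hgain : (1 / p + α - β) * (q ^ (j + 1) * OPT) ≤
        (((S (j + 1)).card : ℝ) - ((S j).card : ℝ)) * (q ^ (j + 1) * OPT / k) := by
      have hpick : (k : ℝ) * (1 / p + α - β) ≤ ((S (j + 1)).card : ℝ) - (S j).card := by
        rw [hβ]
        push_cast at h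
        rw [add_div] at h
        linarith
      calc (1 / p + α - β) * (q ^ (j + 1) * OPT)
          = ((k : ℝ) * (1 / p + α - β)) * (q ^ (j + 1) * OPT / k) := by field_simp
        _ ≤ _ := mul_le_mul_of_nonneg_right hpick (by positivity)
    have hq' : q ^ (j + 1) * (1 / (p : ℝ)) = q ^ j - q ^ (j + 1) := by
      rw [pow_succ, mul_assoc, hq]
      ring
    have hexp : (1 / p + α - β) * (q ^ (j + 1) * OPT) =
        OPT * (q ^ j - q ^ (j + 1) + (α - β) * q ^ (j + 1)) := by
      rw [← hq']
      ring
    have hweak : OPT * (α * q ^ (j + 1 + 1)) ≤ OPT * (α * q ^ (j + 1)) := by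
      gcongr OPT * (α * ?_)
      exact pow_le_pow_of_le_one hq0 hq1 (by omega)
    linarith
end

section
/- Let k ≥ 1 be an integer, let f : Finset E → ℝ be normalized (f(∅) = 0) and OPT ≥ 0, and let e₁, …, e_k be distinct elements such that for every 1 ≤ i ≤ k, f(e_i | {e₁, …, e_{i−1}}) ≥ (OPT − f({e₁, …, e_{i−1}}))/k. Then for every 0 ≤ i ≤ k, OPT − f({e₁, …, e_i}) ≤ ((k−1)/k)^i · OPT. -/
/-!
Write `S i` for the set of the first `i` elements. The threshold condition says that adding the
next element lowers the gap `OPT - f (S i)` by at least a `1 / k` fraction of itself, so the gap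
contracts by the factor `(k - 1) / k ≥ 0` at each step. Induction on `i`, starting from the gap
`OPT` at `S 0 = ∅`, gives the geometric bound.
-/

open Finset

/-- Core inductive inequality of the small-k adaptive-threshold analysis. -/
theorem stmt_6 {E : Type*} [DecidableEq E]
    (k : ℕ) (hk : 1 ≤ k)
    (f : Finset E → ℝ)
    (hnorm : f ∅ = 0)
    (OPT : ℝ) (hOPT : 0 ≤ OPT)
    (e : ℕ → E) (hinj : Set.InjOn e (Set.Iio k))
    (hthr : ∀ i < k,
      f (insert (e i) ((Finset.range i).image e)) - f ((Finset.range i).image e) ≥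
        (OPT - f ((Finset.range i).image e)) / k) :
    ∀ i ≤ k, OPT - f ((Finset.range i).image e) ≤ (((k : ℝ) - 1) / k) ^ i * OPT := by
  have hk' : (1 : ℝ) ≤ k := by exact_mod_cast hk
  have hk0 : (k : ℝ) ≠ 0 := by positivity
  have hq : 0 ≤ ((k : ℝ) - 1) / k := div_nonneg (by linarith) (by linarith)
  intro i
  induction i with
  | zero => intro _; simp [hnorm]
  | succ i ih =>
    intro hi
    have h := hthr i (by omega)
    have ih' := mul_le_mul_of_nonneg_left (ih (by omega)) hq
    rw [Finset.range_add_one, Finset.image_insert]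
    -- Each accepted element shrinks the gap `OPT - f S` by a factor of at least `(k - 1) / k`.
    have hgap : ((k : ℝ) - 1) / k * (OPT - f ((Finset.range i).image e)) =
        (OPT - f ((Finset.range i).image e)) - (OPT - f ((Finset.range i).image e)) / k := by
      field_simp
    rw [pow_succ']
    linarith
end

section
/- Let k ≥ 1 be an integer and ε ≥ 0 a real. Let f : Finset E → ℝ be non-negative, monotone, submodular, and let O be a finset with |O| = k and f(O) = OPT ≥ 0. Let S be a finset with |S| ≤ k and |S ∩ O| ≥ 2εk, such that: (i) if |S| = k then f(S) ≥ |S| · (1+ε)/2 · OPT/k; and (ii) if |S| < k then f(o|S) < (1+ε)/2 · OPT/k for every o ∈ O. Then f(S) ≥ ((1+ε)/2) · OPT. -/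
/-!
If `S` is full, the claim is the first invariant. Otherwise write `t = (1 + ε) / 2 * OPT / k`. By
submodularity, adding the elements of `O \ S` to `S` gains at most `t` each
(`submod_union_le`), so by monotonicity `OPT ≤ f (S ∪ O) ≤ f S + |O \ S| * t`. Since
`|O \ S| = k - |S ∩ O| ≤ (1 - 2 * ε) * k`, this gives
`f S ≥ OPT * (1 - (1 - 2 * ε) * (1 + ε) / 2) = OPT * (1 + ε + 2 * ε ^ 2) / 2`.
-/

/-- Marginal gains over `S` only shrink as `S` grows, so a bound `t` on the gain of each element of
`T` bounds the joint gain of `T` by `|T| * t`. -/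
theorem submod_union_le {E : Type*} [DecidableEq E] (f : Finset E → ℝ)
    (hsubmod : ∀ X Y : Finset E, X ⊆ Y → ∀ e ∉ Y,
      f (insert e Y) - f Y ≤ f (insert e X) - f X)
    (S T : Finset E) (t : ℝ) (hdisj : Disjoint S T)
    (hT : ∀ o ∈ T, f (insert o S) - f S ≤ t) :
    f (S ∪ T) ≤ f S + (T.card : ℝ) * t := by
  induction T using Finset.induction_on with
  | empty => simp
  | insert a T ha ih =>
    rw [Finset.disjoint_insert_right] at hdisj
    have ih' := ih hdisj.2 fun o ho => hT o (Finset.mem_insert_of_mem ho)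
    have hgain := hsubmod S (S ∪ T) Finset.subset_union_left a (by simp [ha, hdisj.1])
    have hbound := hT a (Finset.mem_insert_self a T)
    rw [Finset.union_insert, Finset.card_insert_of_notMem ha]
    push_cast
    linarith

open Finset

/-- If `|S ∩ O| ≥ 2εk`, then `f S ≥ (1+ε)/2 · OPT` under the invariants of the
fixed-threshold procedure. -/
theorem stmt_8 {E : Type*} [DecidableEq E]
    (k : ℕ) (hk : 1 ≤ k) (ε : ℝ) (hε : 0 ≤ ε)
    (f : Finset E → ℝ)
    (hnonneg : ∀ X : Finset E, 0 ≤ f X)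
    (hmono : ∀ X Y : Finset E, X ⊆ Y → f X ≤ f Y)
    (hsubmod : ∀ X Y : Finset E, X ⊆ Y → ∀ e ∉ Y,
      f (insert e Y) - f Y ≤ f (insert e X) - f X)
    (O : Finset E) (OPT : ℝ) (hOcard : O.card = k) (hOPT : f O = OPT) (hOPT0 : 0 ≤ OPT)
    (S : Finset E) (hScard : S.card ≤ k)
    (hSO : 2 * ε * (k : ℝ) ≤ ((S ∩ O).card : ℝ))
    (h1 : S.card = k → f S ≥ (S.card : ℝ) * ((1 + ε) / 2 * OPT / k))
    (h2 : S.card < k → ∀ o ∈ O, f (insert o S) - f S < (1 + ε) / 2 * OPT / k) :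
    f S ≥ (1 + ε) / 2 * OPT := by
  have hk0 : (0 : ℝ) < k := by exact_mod_cast hk
  rcases hScard.eq_or_lt with hfull | hlt
  · have h := h1 hfull
    rw [hfull, mul_div_cancel₀ _ hk0.ne'] at h
    exact h
  · set t := (1 + ε) / 2 * OPT / k with ht
    have ht0 : 0 ≤ t := by positivity
    have hkt : k * t = (1 + ε) / 2 * OPT := mul_div_cancel₀ _ hk0.ne'
    have hunion := submod_union_le f hsubmod S (O \ S) t Finset.disjoint_sdiff
      fun o ho => (h2 hlt o (Finset.mem_sdiff.1 ho).1).le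
    rw [Finset.union_sdiff_self_eq_union] at hunion
    have hO := hmono O (S ∪ O) Finset.subset_union_right
    have hcard : ((O \ S).card : ℝ) + ((S ∩ O).card : ℝ) = k := by
      rw [← hOcard, Finset.inter_comm]
      exact_mod_cast Finset.card_sdiff_add_card_inter O S
    have hle : ((O \ S).card : ℝ) * t ≤ (1 - 2 * ε) * (k * t) := by
      have : ((O \ S).card : ℝ) ≤ (1 - 2 * ε) * k := by linarith
      nlinarith [mul_le_mul_of_nonneg_right this ht0]
    rw [hkt] at hle
    have hsq : 0 ≤ ε ^ 2 * OPT := by positivity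
    nlinarith
end

section
/- Let k ≥ 1 be an integer and ε, α ≥ 0 reals. Let f : Finset E → ℝ be normalized, non-negative, monotone, submodular, let O be a finset with |O| ≤ k and f(O) = OPT ≥ 0, and let S be a finset with f(S) ≤ α·OPT. Define G := {o ∈ O : f(o|S) ≥ (1+ε)/2 · OPT/k}. Then f(G) ≥ (1 − α − (1+ε)/2) · OPT. -/
/-!
Write `τ = (1 + ε) / 2 * OPT / k`, and split `O` into the good part `G` and the bad part `B`, whose
elements have marginal gain below `τ` with respect to `S`. By monotonicity and submodularity,
`OPT ≤ f (S ∪ G ∪ B) ≤ f (S ∪ G) + ∑ b ∈ B, f(b|S) ≤ f S + f G + |B| * τ`, where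
`f S ≤ α * OPT` and `|B| * τ ≤ k * τ = (1 + ε) / 2 * OPT`. The second inequality is
`union_le_add_sum_marginals`, the third uses `union_le_add`.
-/

open Finset

/-- Adding `T` to a superset `A` of `S` gains at most the sum of the marginals with respect to `S`.
Monotonicity covers the elements of `T` that already lie in `A`. -/
lemma union_le_add_sum_marginals {E : Type*} [DecidableEq E] (f : Finset E → ℝ)
    (hmono : ∀ X Y : Finset E, X ⊆ Y → f X ≤ f Y)
    (hsubmod : ∀ X Y : Finset E, X ⊆ Y → ∀ e ∉ Y,
      f (insert e Y) - f Y ≤ f (insert e X) - f X)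
    (S A T : Finset E) (hSA : S ⊆ A) :
    f (A ∪ T) ≤ f A + ∑ t ∈ T, (f (insert t S) - f S) := by
  induction T using Finset.induction_on with
  | empty => simp
  | insert e T he ih =>
    rw [Finset.sum_insert he, Finset.union_insert]
    by_cases h : e ∈ A ∪ T
    · rw [Finset.insert_eq_of_mem h]
      have := hmono S (insert e S) (Finset.subset_insert _ _)
      linarith
    · have := hsubmod S (A ∪ T) (hSA.trans Finset.subset_union_left) e h
      linarith

/-- A normalized monotone submodular function is subadditive. -/
lemma union_le_add {E : Type*} [DecidableEq E] (f : Finset E → ℝ)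
    (hnorm : f ∅ = 0)
    (hmono : ∀ X Y : Finset E, X ⊆ Y → f X ≤ f Y)
    (hsubmod : ∀ X Y : Finset E, X ⊆ Y → ∀ e ∉ Y,
      f (insert e Y) - f Y ≤ f (insert e X) - f X)
    (S T : Finset E) : f (S ∪ T) ≤ f S + f T := by
  induction T using Finset.induction_on with
  | empty => simp [hnorm]
  | insert e T he ih =>
    rw [Finset.union_insert]
    by_cases h : e ∈ S ∪ T
    · rw [Finset.insert_eq_of_mem h]
      have := hmono T (insert e T) (Finset.subset_insert _ _)
      linarith
    · have := hsubmod T (S ∪ T) Finset.subset_union_right e h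
      linarith

/-- The set `G` of "good" optimum elements has large value. -/
theorem stmt_9 {E : Type*} [DecidableEq E]
    (k : ℕ) (hk : 1 ≤ k) (ε α : ℝ) (hε : 0 ≤ ε) (hα : 0 ≤ α)
    (f : Finset E → ℝ)
    (hnorm : f ∅ = 0)
    (hnonneg : ∀ X : Finset E, 0 ≤ f X)
    (hmono : ∀ X Y : Finset E, X ⊆ Y → f X ≤ f Y)
    (hsubmod : ∀ X Y : Finset E, X ⊆ Y → ∀ e ∉ Y,
      f (insert e Y) - f Y ≤ f (insert e X) - f X)
    (O : Finset E) (OPT : ℝ) (hOcard : O.card ≤ k) (hOPT : f O = OPT) (hOPT0 : 0 ≤ OPT)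
    (S : Finset E) (hS : f S ≤ α * OPT) :
    f (O.filter fun o => (1 + ε) / 2 * OPT / k ≤ f (insert o S) - f S) ≥
      (1 - α - (1 + ε) / 2) * OPT := by
  set τ : ℝ := (1 + ε) / 2 * OPT / k with hτ
  set G := O.filter fun o => τ ≤ f (insert o S) - f S with hG
  set B := O.filter fun o => ¬ τ ≤ f (insert o S) - f S with hB
  have hk0 : (0 : ℝ) < k := by exact_mod_cast hk
  have hτ0 : 0 ≤ τ := by positivity
  have hkτ : (k : ℝ) * τ = (1 + ε) / 2 * OPT := by
    rw [hτ]; field_simp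
  have hGB : G ∪ B = O := Finset.filter_union_filter_not_eq _ _
  have h1 : OPT ≤ f ((S ∪ G) ∪ B) := by
    rw [← hOPT, Finset.union_assoc, hGB]
    exact hmono _ _ Finset.subset_union_right
  have h2 := union_le_add_sum_marginals f hmono hsubmod S (S ∪ G) B Finset.subset_union_left
  have h3 := union_le_add f hnorm hmono hsubmod S G
  have h4 : ∑ b ∈ B, (f (insert b S) - f S) ≤ (B.card : ℝ) * τ := by
    rw [← nsmul_eq_mul]
    exact Finset.sum_le_card_nsmul _ _ _
      fun b hb => (not_le.mp (Finset.mem_filter.mp hb).2).le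
  have h5 : (B.card : ℝ) * τ ≤ k * τ := by
    gcongr
    exact (Finset.card_filter_le _ _).trans hOcard
  linarith
end

section
/- Let k ≥ 1 be an integer and set β = 10⁻³, ε = 10⁻⁸, δ = 3·10⁻¹¹. Let f : Finset E → ℝ be non-negative, monotone, submodular. Let O be a finset with |O| = k, f(O) = OPT ≥ 0, partitioned as O = O_L ∪ O_R with O_L ∩ O_R = ∅ and |O_L| ≤ 1.1·β·k. Let S be a finset such that f(o|S) ≤ (1+ε)/2 · OPT/k for every o ∈ O_L, and f(o|S) ≤ (1−δ)/2 · OPT/k for every o ∈ O_R. Then f(S) ≥ (1/2 − 1.1β·ε/2 + (1 − 1.1β)·δ/2) · OPT ≥ (0.5 + 9·10⁻¹²) · OPT. -/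
/-!
By monotonicity and submodularity, `OPT = f O ≤ f (S ∪ O) ≤ f S + ∑ o ∈ O, f(o|S)`
(`marginal_union_le_sum`). Bounding the marginals by the two thresholds and writing
`x = |O_L| / k ≤ 1.1 β`, the sum is at most `((1 - δ) / 2 + x (ε + δ) / 2) OPT`, which is
increasing in `x`; taking `x = 1.1 β` gives the first bound. The second one is numerical:
`-1.1 β ε / 2 + (1 - 1.1 β) δ / 2 ≈ 9.48e-12`.
-/

open Finset

/-- For a monotone submodular function, the gain of adding a set is at most the sum of the
individual marginal gains. Monotonicity is needed for elements already in `S ∪ T`. -/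
lemma marginal_union_le_sum {E : Type*} [DecidableEq E] (f : Finset E → ℝ)
    (hmono : ∀ X Y : Finset E, X ⊆ Y → f X ≤ f Y)
    (hsubmod : ∀ X Y : Finset E, X ⊆ Y → ∀ e ∉ Y,
      f (insert e Y) - f Y ≤ f (insert e X) - f X)
    (S T : Finset E) :
    f (S ∪ T) - f S ≤ ∑ o ∈ T, (f (insert o S) - f S) := by
  induction T using Finset.induction_on with
  | empty => simp
  | insert a T ha ih =>
    rw [Finset.sum_insert ha, Finset.union_insert]
    by_cases h : a ∈ S ∪ T
    · rw [Finset.insert_eq_of_mem h]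
      have := hmono S (insert a S) (Finset.subset_insert a S)
      linarith
    · have := hsubmod S (S ∪ T) Finset.subset_union_left a h
      linarith


/-- The |S| < k case of the two-threshold algorithm analysis. -/
theorem stmt_10 {E : Type*} [DecidableEq E]
    (k : ℕ) (hk : 1 ≤ k)
    (β ε δ : ℝ) (hβ : β = 1e-3) (hε : ε = 1e-8) (hδ : δ = 3e-11)
    (f : Finset E → ℝ)
    (hnonneg : ∀ X : Finset E, 0 ≤ f X)
    (hmono : ∀ X Y : Finset E, X ⊆ Y → f X ≤ f Y)
    (hsubmod : ∀ X Y : Finset E, X ⊆ Y → ∀ e ∉ Y,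
      f (insert e Y) - f Y ≤ f (insert e X) - f X)
    (O O_L O_R : Finset E) (OPT : ℝ)
    (hOcard : O.card = k) (hOPT : f O = OPT) (hOPT0 : 0 ≤ OPT)
    (hpart : O = O_L ∪ O_R) (hdisj : O_L ∩ O_R = ∅)
    (hOL : (O_L.card : ℝ) ≤ 1.1 * β * k)
    (S : Finset E)
    (hL : ∀ o ∈ O_L, f (insert o S) - f S ≤ (1 + ε) / 2 * OPT / k)
    (hR : ∀ o ∈ O_R, f (insert o S) - f S ≤ (1 - δ) / 2 * OPT / k) :
    f S ≥ (1 / 2 - 1.1 * β * ε / 2 + (1 - 1.1 * β) * δ / 2) * OPT ∧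
    (1 / 2 - 1.1 * β * ε / 2 + (1 - 1.1 * β) * δ / 2) * OPT ≥ (0.5 + 9e-12) * OPT := by
  have hk0 : (0 : ℝ) < k := by exact_mod_cast hk
  refine ⟨?_, ?_⟩
  · have hd : Disjoint O_L O_R := Finset.disjoint_iff_inter_eq_empty.mpr hdisj
    have hcard : (O_L.card : ℝ) + O_R.card = k := by
      rw [← hOcard, hpart, Finset.card_union_of_disjoint hd]
      push_cast
      rfl
    have hO : OPT ≤ f (S ∪ O) := hOPT ▸ hmono O (S ∪ O) Finset.subset_union_right
    have hgain := marginal_union_le_sum f hmono hsubmod S O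
    have hsum : ∑ o ∈ O, (f (insert o S) - f S) =
        ∑ o ∈ O_L, (f (insert o S) - f S) + ∑ o ∈ O_R, (f (insert o S) - f S) := by
      rw [hpart, Finset.sum_union hd]
    have hsumL := Finset.sum_le_card_nsmul O_L _ _ hL
    have hsumR := Finset.sum_le_card_nsmul O_R _ _ hR
    rw [nsmul_eq_mul, mul_div_assoc] at hsumL hsumR
    obtain ⟨t, ht⟩ : ∃ t, t = OPT / k := ⟨_, rfl⟩
    have ht0 : 0 ≤ t := ht ▸ div_nonneg hOPT0 hk0.le
    have hkt : OPT = k * t := by rw [ht]; field_simp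
    rw [← ht] at hsumL hsumR
    have hεδ : 0 ≤ (ε + δ) / 2 * t := by
      have : 0 ≤ ε + δ := by rw [hε, hδ]; norm_num
      positivity
    -- The total threshold bound increases with `|O_L|`, with slope `(ε + δ) / 2 * (OPT / k)`.
    have hslope := mul_le_mul_of_nonneg_right hOL hεδ
    have hRcard : (O_R.card : ℝ) = k - O_L.card := by linarith
    rw [hRcard] at hsumR
    rw [hkt] at hO ⊢
    linarith
  · subst hβ hε hδ
    exact mul_le_mul_of_nonneg_right (by norm_num) hOPT0
end

section
/- Let E be a type, let U, V : Finset E be disjoint finsets, let w ∈ E with w ∉ U and w ∉ V, and let k be a natural number. Define f : Finset E → ℝ by f(S) = |U ∩ S| + (k if w ∈ S, and min(k, |V ∩ S|) otherwise). Then f is normalized (f(∅) = 0), monotone, and submodular. -/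
/-!
The count `|U ∩ S|` is monotone and modular, so only the second summand matters. Away from `w`
it is the truncation `min k` of the modular function `|V ∩ S|`, and `min k` is monotone and
concave, which gives monotonicity and diminishing marginals. Containing `w` puts the second
summand at its maximum `k`: the marginal of `w` is `k - min k |V ∩ S|`, which decreases in `S`,
and once `w ∈ S` every other marginal of this summand is `0`.
-/

open Finset

/-- The hard-instance function from the INDEX reduction. -/
noncomputable def hardFn {E : Type*} [DecidableEq E]
    (U V : Finset E) (w : E) (k : ℕ) (S : Finset E) : ℝ :=
  ((U ∩ S).card : ℝ) + (if w ∈ S then (k : ℝ) else min (k : ℝ) ((V ∩ S).card))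

/-- The marginal of the coverage count `S ↦ |A ∩ S|` at a new element `e` does not depend
on `S`. -/
lemma card_inter_insert_eq {E : Type*} [DecidableEq E] (A S : Finset E) (e : E) (he : e ∉ S) :
    ((A ∩ insert e S).card : ℝ) = (A ∩ S).card + if e ∈ A then 1 else 0 := by
  by_cases h : e ∈ A
  · rw [inter_insert_of_mem h, card_insert_of_notMem (by simp [he])]
    simp [h]
  · rw [inter_insert_of_notMem h]
    simp [h]

/-- The hard-instance function is normalized, monotone and submodular. -/
theorem stmt_14 {E : Type*} [DecidableEq E]
    (U V : Finset E) (hUV : Disjoint U V)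
    (w : E) (hwU : w ∉ U) (hwV : w ∉ V) (k : ℕ) :
    hardFn U V w k (∅ : Finset E) = 0 ∧
    (∀ X Y : Finset E, X ⊆ Y → hardFn U V w k X ≤ hardFn U V w k Y) ∧
    (∀ X Y : Finset E, X ⊆ Y → ∀ e ∉ Y,
      hardFn U V w k (insert e Y) - hardFn U V w k Y ≤
        hardFn U V w k (insert e X) - hardFn U V w k X) := by
  have cardMono : ∀ A X Y : Finset E, X ⊆ Y → ((A ∩ X).card : ℝ) ≤ (A ∩ Y).card :=
    fun A X Y h => by exact_mod_cast card_le_card (inter_subset_inter_left h)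
  refine ⟨by simp [hardFn], fun X Y h => ?_, fun X Y h e he => ?_⟩
  · have hU := cardMono U X Y h
    have hV := cardMono V X Y h
    unfold hardFn
    refine add_le_add hU ?_
    by_cases hX : w ∈ X
    · simp [hX, h hX]
    · by_cases hY : w ∈ Y
      · simp [hX, hY]
      · simpa only [hX, hY, if_false] using min_le_min_left _ hV
  · have heX : e ∉ X := fun hX => he (h hX)
    have hV := cardMono V X Y h
    unfold hardFn
    rw [card_inter_insert_eq U Y e he, card_inter_insert_eq U X e heX,
      card_inter_insert_eq V Y e he, card_inter_insert_eq V X e heX]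
    by_cases hew : w = e
    · subst hew
      have := min_le_min_left (k : ℝ) hV
      simp only [mem_insert_self, he, heX, if_true, if_false]
      linarith
    · simp only [mem_insert, hew, false_or]
      -- `t` is the marginal of `|V ∩ ·|` at `e`; only its sign matters from here on.
      have ht : (0 : ℝ) ≤ if e ∈ V then 1 else 0 := by split_ifs <;> norm_num
      generalize (if e ∈ V then (1 : ℝ) else 0) = t at ht ⊢
      by_cases hX : w ∈ X
      · simp [hX, h hX]
      · by_cases hY : w ∈ Y
        · have := min_le_min_left (k : ℝ) (le_add_of_nonneg_right ht : ((V ∩ X).card : ℝ) ≤ _)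
          simp only [hX, hY, if_true, if_false]
          linarith
        · simp only [hX, hY, if_false]
          -- Concavity of `min k`: its increments over steps of length `t` decrease.
          grind
end

section
/- Let E be a type, let U, V : Finset E be disjoint finsets, let w ∈ E with w ∉ U and w ∉ V, let k ≥ 1 be a natural number with |U| ≥ k − 1, and define f : Finset E → ℝ by f(S) = |U ∩ S| + (k if w ∈ S, and min(k, |V ∩ S|) otherwise). Then: (a) f(S) ≤ 2k − 1 for every finset S with |S| ≤ k, and there exists a finset S with |S| ≤ k, S ⊆ U ∪ V ∪ {w}, and f(S) = 2k − 1; and (b) f(S) ≤ k for every finset S ⊆ V ∪ {w} with |S| ≤ k. -/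
/-!
If `w ∈ S` and `|S| ≤ k`, then `S` contains at most `k - 1` elements of `U`, so its value is at most
`(k - 1) + k`; this is attained by `w` together with `k - 1` elements of `U`. If `w ∉ S`, the value
is at most `|U ∩ S| + |V ∩ S| ≤ |S| ≤ k`. A set avoiding `U` only has the second summand, which never
exceeds `k`.
-/

open Finset

/-- Computation of the optimum value of the hard instance. -/
theorem stmt_15 {E : Type*} [DecidableEq E]
    (U V : Finset E) (hUV : Disjoint U V)
    (w : E) (hwU : w ∉ U) (hwV : w ∉ V)
    (k : ℕ) (hk : 1 ≤ k) (hU : k - 1 ≤ U.card) :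
    ((∀ S : Finset E, S.card ≤ k → hardFn U V w k S ≤ 2 * (k : ℝ) - 1) ∧
      (∃ S : Finset E, S.card ≤ k ∧ S ⊆ U ∪ V ∪ {w} ∧
        hardFn U V w k S = 2 * (k : ℝ) - 1)) ∧
    (∀ S : Finset E, S ⊆ V ∪ {w} → S.card ≤ k → hardFn U V w k S ≤ (k : ℝ)) := by
  have hk' : (1 : ℝ) ≤ k := by exact_mod_cast hk
  refine ⟨⟨fun S hS => ?_, ?_⟩, fun S hSV hS => ?_⟩
  · unfold hardFn
    split_ifs with hw
    · -- `w` takes one of the `k` slots, so at most `k - 1` elements of `U` are left.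
      have hsub : insert w (U ∩ S) ⊆ S := insert_subset hw inter_subset_right
      have hcard := card_le_card hsub
      rw [card_insert_of_notMem (by simp [hwU])] at hcard
      have : (((U ∩ S).card + 1 : ℕ) : ℝ) ≤ k := by exact_mod_cast hcard.trans hS
      push_cast at this
      linarith
    · -- Disjointness of `U` and `V` bounds the value by `|S| ≤ k ≤ 2k - 1`.
      have hdisj : Disjoint (U ∩ S) (V ∩ S) :=
        hUV.mono inter_subset_left inter_subset_left
      have hcard := card_le_card (union_subset
        (inter_subset_right : U ∩ S ⊆ S) (inter_subset_right : V ∩ S ⊆ S))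
      rw [card_union_of_disjoint hdisj] at hcard
      have : (((U ∩ S).card + (V ∩ S).card : ℕ) : ℝ) ≤ k := by
        exact_mod_cast hcard.trans hS
      push_cast at this
      have := min_le_right (k : ℝ) ((V ∩ S).card : ℝ)
      linarith
  · -- The optimum is attained by `w` together with any `k - 1` elements of `U`.
    obtain ⟨T, hTU, hT⟩ := exists_subset_card_eq hU
    have hwT : w ∉ T := fun h => hwU (hTU h)
    refine ⟨insert w T, ?_, ?_, ?_⟩
    · rw [card_insert_of_notMem hwT]
      omega
    · intro x hx
      rcases mem_insert.mp hx with rfl | hx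
      · simp
      · simp [hTU hx]
    · have hUT : U ∩ insert w T = T := by
        rw [inter_insert_of_notMem hwU, inter_eq_right.mpr hTU]
      rw [hardFn, hUT, if_pos (mem_insert_self w T), hT, Nat.cast_sub hk]
      push_cast
      ring
  · have hUS : U ∩ S = ∅ := by
      rw [← disjoint_iff_inter_eq_empty]
      exact (disjoint_union_right.mpr ⟨hUV, disjoint_singleton_right.mpr hwU⟩).mono_right hSV
    rw [hardFn, hUS]
    split_ifs <;> simp
end

section
/- Let f : Finset E → ℝ be submodular, let e₁, …, e_m be distinct elements of E, and let T be a finset with T ⊆ {e₁, …, e_m}. Then f(T) ≥ f(∅) + Σ_{i : e_i ∈ T} f(e_i | {e₁, …, e_{i−1}}). -/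
/-!
Add the elements of `T` one at a time in the order `e 0, e 1, …`. When `e k ∈ T` is added, the set
built so far is `T ∩ {e 0, …, e (k - 1)}`, a subset of the full prefix `{e 0, …, e (k - 1)}`, which
does not contain `e k` by injectivity. Submodularity then bounds the actual gain below by the gain
over the full prefix, and the gains telescope to `f T - f ∅`.
-/

open Finset

/-- Pointwise telescoping inequality for submodular functions. -/
theorem stmt_16 {E : Type*} [DecidableEq E]
    (f : Finset E → ℝ)
    (hsubmod : ∀ X Y : Finset E, X ⊆ Y → ∀ e ∉ Y,
      f (insert e Y) - f Y ≤ f (insert e X) - f X)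
    (m : ℕ) (e : ℕ → E) (hinj : Set.InjOn e (Set.Iio m))
    (T : Finset E) (hT : T ⊆ (Finset.range m).image e) :
    f T ≥ f ∅ + ∑ i ∈ (Finset.range m).filter (fun i => e i ∈ T),
      (f (insert (e i) ((Finset.range i).image e)) - f ((Finset.range i).image e)) := by
  -- Induction on the length `k` of the prefix, for the trace of `T` on `{e 0, …, e (k - 1)}`.
  have key : ∀ k ≤ m, f ∅ + ∑ i ∈ (Finset.range k).filter (fun i => e i ∈ T),
      (f (insert (e i) ((Finset.range i).image e)) - f ((Finset.range i).image e))
        ≤ f (T ∩ (Finset.range k).image e) := by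
    intro k
    induction k with
    | zero => simp
    | succ k ih =>
      intro hk
      have ih := ih (by omega)
      have hnot : e k ∉ (Finset.range k).image e := by
        intro h
        obtain ⟨j, hj, hjk⟩ := Finset.mem_image.1 h
        have hj := Finset.mem_range.1 hj
        have := hinj (Set.mem_Iio.2 (by omega)) (Set.mem_Iio.2 (by omega)) hjk
        omega
      rw [Finset.range_add_one, Finset.filter_insert, Finset.image_insert]
      by_cases h : e k ∈ T
      · rw [if_pos h, Finset.sum_insert (by simp), Finset.inter_insert_of_mem h]
        -- The gain of `e k` over the whole prefix is at most its gain over the trace of `T`.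
        have := hsubmod _ _ (Finset.inter_subset_right (s₁ := T)) (e k) hnot
        linarith
      · rw [if_neg h, Finset.inter_insert_of_notMem h]
        exact ih
  have := key m le_rfl
  rwa [Finset.inter_eq_left.2 hT] at this
end

section
/- Let (Ω, P) be a probability space, let f : Finset E → ℝ be normalized, monotone and submodular, let e₁, …, e_m be distinct elements of E with D := {e₁, …, e_m}, let 0 ≤ p ≤ 1, and let T : Ω → Finset E be a random finset such that T(ω) ⊆ D for every ω, the event {e_i ∈ T} is measurable for each i, and P(e_i ∈ T) ≥ p for every 1 ≤ i ≤ m. Then E[f(T)] ≥ p · f(D). -/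
/-!
Write `D_k = {e 0, …, e (k-1)}` and let `g i = f (D_{i+1}) - f (D_i)` be the marginal gains along
the enumeration of `D`. They are non-negative by monotonicity and telescope to `f D`. Submodularity
gives the pointwise bound `∑ i, 1[e i ∈ T] * g i ≤ f T` (`sum_marginal_le`), and taking expectations
with `P (e i ∈ T) ≥ p` yields the claim. The function `f ∘ T` is integrable because it is a
finite combination of indicators of the measurable events `{T = S}`, `S ⊆ D`
(`integrable_comp_randomSet`).
-/

open Finset MeasureTheory

/-- The marginal gain of `e i` over the full prefix `e 0, …, e (i-1)` is at most its gain over the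
part of that prefix lying in `S`; summing over the elements of `S` gives a lower bound for `f`. -/
lemma sum_marginal_le {E : Type*} [DecidableEq E] (f : Finset E → ℝ)
    (hnorm : f ∅ = 0)
    (hsubmod : ∀ X Y : Finset E, X ⊆ Y → ∀ e ∉ Y,
      f (insert e Y) - f Y ≤ f (insert e X) - f X)
    (m : ℕ) (e : ℕ → E) (hinj : Set.InjOn e (Set.Iio m)) (S : Finset E) (k : ℕ) (hk : k ≤ m) :
    ∑ i ∈ Finset.range k, (if e i ∈ S then
      f ((Finset.range (i + 1)).image e) - f ((Finset.range i).image e) else 0)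
      ≤ f ((Finset.range k).image e ∩ S) := by
  induction k with
  | zero => simp [hnorm]
  | succ k ih =>
    have ih := ih (by omega)
    rw [Finset.sum_range_succ, Finset.range_add_one, Finset.image_insert]
    by_cases hS : e k ∈ S
    · have hnot : e k ∉ (Finset.range k).image e := by
        intro h
        obtain ⟨j, hj, hje⟩ := Finset.mem_image.1 h
        have hjk := Finset.mem_range.1 hj
        have := hinj (Set.mem_Iio.2 (by omega)) (Set.mem_Iio.2 (by omega)) hje
        omega
      have := hsubmod _ _ (Finset.inter_subset_left (s₁ := (Finset.range k).image e) (s₂ := S))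
        (e k) hnot
      rw [if_pos hS, Finset.insert_inter_of_mem hS]
      linarith
    · rw [if_neg hS, Finset.insert_inter_of_notMem hS]
      linarith

/-- A real function of a random subset of a fixed finite set `D` is integrable as soon as all the
membership events `{d ∈ T}`, `d ∈ D`, are measurable. -/
lemma integrable_comp_randomSet {E : Type*} [DecidableEq E] {Ω : Type*} [MeasurableSpace Ω]
    (P : Measure Ω) [IsFiniteMeasure P] (f : Finset E → ℝ) (D : Finset E) (T : Ω → Finset E)
    (hTD : ∀ ω, T ω ⊆ D) (hmeas : ∀ d ∈ D, MeasurableSet {ω | d ∈ T ω}) :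
    Integrable (fun ω => f (T ω)) P := by
  have hfib : ∀ S ∈ D.powerset, MeasurableSet {ω | T ω = S} := by
    intro S hS
    have hSD := Finset.mem_powerset.1 hS
    have heq : {ω | T ω = S} = ⋂ d ∈ D, {ω | d ∈ T ω ↔ d ∈ S} := by
      ext ω
      simp only [Set.mem_ofPred_eq, Set.mem_iInter]
      refine ⟨fun h d _ => by rw [h], fun h => ?_⟩
      ext d
      exact ⟨fun hd => (h d (hTD ω hd)).1 hd, fun hd => (h d (hSD hd)).2 hd⟩
    rw [heq]
    exact Finset.measurableSet_biInter _ fun d hd => (hmeas d hd).iff (.const _)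
  have hsum : (fun ω => f (T ω)) =
      fun ω => ∑ S ∈ D.powerset, {ω | T ω = S}.indicator (fun _ => f S) ω := by
    funext ω
    simp [Set.indicator_apply, hTD ω]
  rw [hsum]
  exact integrable_finsetSum _ fun S hS => (integrable_const (f S)).indicator (hfib S hS)

/-- Expectation bound: if each element of `D` belongs to the random set `T`
with probability at least `p`, then `E[f(T)] ≥ p · f(D)`. -/
theorem stmt_17 {E : Type*} [DecidableEq E]
    {Ω : Type*} [MeasurableSpace Ω]
    (P : Measure Ω) [IsProbabilityMeasure P]
    (f : Finset E → ℝ)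
    (hnorm : f ∅ = 0)
    (hmono : ∀ X Y : Finset E, X ⊆ Y → f X ≤ f Y)
    (hsubmod : ∀ X Y : Finset E, X ⊆ Y → ∀ e ∉ Y,
      f (insert e Y) - f Y ≤ f (insert e X) - f X)
    (m : ℕ) (e : ℕ → E) (hinj : Set.InjOn e (Set.Iio m))
    (p : ℝ) (hp0 : 0 ≤ p) (hp1 : p ≤ 1)
    (T : Ω → Finset E)
    (hTD : ∀ ω, T ω ⊆ (Finset.range m).image e)
    (hmeas : ∀ i < m, MeasurableSet {ω | e i ∈ T ω})
    (hprob : ∀ i < m, ENNReal.ofReal p ≤ P {ω | e i ∈ T ω}) :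
    p * f ((Finset.range m).image e) ≤ ∫ ω, f (T ω) ∂P := by
  set g : ℕ → ℝ := fun i =>
    f ((Finset.range (i + 1)).image e) - f ((Finset.range i).image e) with hg
  have hg0 : ∀ i, 0 ≤ g i := fun i =>
    sub_nonneg.2 (hmono _ _ (Finset.image_subset_image (Finset.range_mono (Nat.le_succ i))))
  have htel : ∑ i ∈ Finset.range m, g i = f ((Finset.range m).image e) := by
    rw [hg, Finset.sum_range_sub (fun i => f ((Finset.range i).image e))]
    simp [hnorm]
  have hint : ∀ i ∈ Finset.range m,
      Integrable ({ω | e i ∈ T ω}.indicator (fun _ => g i)) P := fun i hi =>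
    (integrable_const (g i)).indicator (hmeas i (Finset.mem_range.1 hi))
  have hfT : Integrable (fun ω => f (T ω)) P := by
    refine integrable_comp_randomSet P f _ T hTD fun d hd => ?_
    obtain ⟨i, hi, rfl⟩ := Finset.mem_image.1 hd
    exact hmeas i (Finset.mem_range.1 hi)
  calc p * f ((Finset.range m).image e)
      = ∑ i ∈ Finset.range m, p * g i := by rw [← htel, Finset.mul_sum]
    _ ≤ ∑ i ∈ Finset.range m, P.real {ω | e i ∈ T ω} * g i := by
        refine Finset.sum_le_sum fun i hi => mul_le_mul_of_nonneg_right ?_ (hg0 i)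
        exact (ENNReal.ofReal_le_iff_le_toReal (measure_ne_top P _)).1
          (hprob i (Finset.mem_range.1 hi))
    _ = ∑ i ∈ Finset.range m, ∫ ω, {ω | e i ∈ T ω}.indicator (fun _ => g i) ω ∂P := by
        refine Finset.sum_congr rfl fun i hi => ?_
        rw [integral_indicator_const _ (hmeas i (Finset.mem_range.1 hi)), smul_eq_mul]
    _ = ∫ ω, ∑ i ∈ Finset.range m, {ω | e i ∈ T ω}.indicator (fun _ => g i) ω ∂P :=
        (integral_finsetSum _ hint).symm
    _ ≤ ∫ ω, f (T ω) ∂P := by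
        refine integral_mono (integrable_finsetSum _ hint) hfT fun ω => ?_
        have h := sum_marginal_le f hnorm hsubmod m e hinj (T ω) m le_rfl
        rw [Finset.inter_eq_right.2 (hTD ω)] at h
        simpa only [Set.indicator_apply, Set.mem_ofPred_eq] using h
end
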